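/- arXiv:math/0205177 — 2 statements merged into one kernel-verified Lean document; each statement's English description precedes it below -/
import Mathlib

section
/- The numerical range of a bounded operator on a complex Hilbert space is a convex subset of ℂ (Toeplitz–Hausdorff theorem). -/
/-!
Let `z = ⟪x, d x⟫` and `w = ⟪y, d y⟫` be distinct points of the numerical range and put
`e = d - w`, so that `⟪x, e x⟫ = z - w` and `⟪y, e y⟫ = 0`. Multiplying `y` by a suitable unit
scalar `c` (`exists_phase`) makes the cross terms of the form `⟪v, e v⟫` a real multiple of
`z - w`. Along the path `v t = (1 - t) x + t c y`, the quotient `⟪v t, e (v t)⟫ / (z - w)` is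
therefore real, and the intermediate value theorem makes it equal to `a ‖v t‖ ^ 2` for some `t`,
for any prescribed `a ∈ [0, 1]`. Since `z ≠ w`, the vectors `x` and `c y` are not proportional, so
`v t ≠ 0`, and normalizing `v t` gives the point `w + a (z - w)` (`mem_of_ne_zero`).
-/

open scoped InnerProductSpace

/-- The phase of `c` is chosen so that the off-diagonal terms of a sesquilinear form, evaluated on
`x + c y`, add up to a real number. -/
theorem exists_phase (A B : ℂ) : ∃ c : ℂ, ‖c‖ = 1 ∧
    ∃ r : ℝ, c * A + (starRingEnd ℂ) c * B = r := by
  -- The imaginary part of `c * A + conj c * B` is that of `c * (A - conj B)`.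
  obtain ⟨c, hc, h⟩ : ∃ c : ℂ, ‖c‖ = 1 ∧ (c * (A - (starRingEnd ℂ) B)).im = 0 := by
    obtain ⟨c, hc, h⟩ := RCLike.exists_norm_eq_mul_self (A - (starRingEnd ℂ) B)
    refine ⟨c, hc, ?_⟩
    rw [← h]
    exact Complex.ofReal_im _
  refine ⟨c, hc, (c * A + (starRingEnd ℂ) c * B).re, ?_⟩
  apply Complex.ext
  · simp
  · simp at h ⊢
    linarith

/-- A Rayleigh quotient of any nonzero vector lies in the numerical range, by normalization. -/
theorem mem_of_ne_zero {H : Type*} [NormedAddCommGroup H] [InnerProductSpace ℂ H]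
    (d : H →L[ℂ] H) (v : H) (hv : v ≠ 0) (p : ℂ) (h : ⟪v, d v⟫_ℂ = p * ⟪v, v⟫_ℂ) :
    ∃ x : H, ‖x‖ = 1 ∧ ⟪x, d x⟫_ℂ = p := by
  have hn : (‖v‖ : ℂ) ≠ 0 := by simpa using hv
  refine ⟨((‖v‖ : ℂ)⁻¹) • v, ?_, ?_⟩
  · exact norm_smul_inv_norm hv
  · rw [map_smul, inner_smul_left, inner_smul_right, h, inner_self_eq_norm_sq_to_K]
    simp only [map_inv₀, Complex.conj_ofReal, Complex.coe_algebraMap]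
    field_simp

/-- Toeplitz–Hausdorff: the numerical range of a bounded operator on a complex
Hilbert space is a convex subset of `ℂ`. -/
theorem numericalRange_convex
    {H : Type*} [NormedAddCommGroup H] [InnerProductSpace ℂ H]
    (d : H →L[ℂ] H) :
    Convex ℝ {z : ℂ | ∃ x : H, ‖x‖ = 1 ∧ ⟪x, d x⟫_ℂ = z} := by
  rintro z ⟨x, hx, hz⟩ w ⟨y, hy, hw⟩ a b ha hb hab
  obtain rfl : b = 1 - a := by linarith
  by_cases hzw : z = w
  · subst hzw
    refine ⟨x, hx, ?_⟩
    rw [hz, ← add_smul, hab, one_smul]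
  have hk : z - w ≠ 0 := sub_ne_zero.mpr hzw
  have hxx : ⟪x, x⟫_ℂ = 1 := by simp [inner_self_eq_norm_sq_to_K, hx]
  have hyy : ⟪y, y⟫_ℂ = 1 := by simp [inner_self_eq_norm_sq_to_K, hy]
  obtain ⟨c, hc, r, hr⟩ := exists_phase
    ((⟪x, d y⟫_ℂ - w * ⟪x, y⟫_ℂ) / (z - w)) ((⟪y, d x⟫_ℂ - w * ⟪y, x⟫_ℂ) / (z - w))
  have hcc : (starRingEnd ℂ) c * c = 1 := by
    rw [Complex.conj_mul', hc]; simp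
  have hr' : c * (⟪x, d y⟫_ℂ - w * ⟪x, y⟫_ℂ)
      + (starRingEnd ℂ) c * (⟪y, d x⟫_ℂ - w * ⟪y, x⟫_ℂ) = r * (z - w) := by
    rw [← hr]; field_simp
  let v : ℝ → H := fun t => ((1 - t : ℝ) : ℂ) • x + ((t : ℂ) * c) • y
  have hv_cont : Continuous v := by fun_prop
  have hform : ∀ t : ℝ, ⟪v t, d (v t)⟫_ℂ - w * ⟪v t, v t⟫_ℂ
      = (((1 - t) ^ 2 + t * (1 - t) * r : ℝ) : ℂ) * (z - w) := by
    intro t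
    simp only [v, map_add, map_smul, inner_add_left, inner_add_right, inner_smul_left,
      inner_smul_right, map_mul, Complex.conj_ofReal, hz, hw, hxx, hyy]
    push_cast
    linear_combination ((1 - t) * t : ℂ) * hr'
  have hv_ne : ∀ t ∈ Set.Icc (0 : ℝ) 1, v t ≠ 0 := by
    intro t ht h0
    have h1 : ((1 - t : ℝ) : ℂ) • x = -(((t : ℂ) * c) • y) := eq_neg_of_add_eq_zero_left h0
    -- Comparing norms in `(1 - t) x = - t c y` forces `t = 1 / 2`, hence `x = - c y`.
    have h2 := congrArg norm h1
    rw [norm_neg, norm_smul, norm_smul, norm_mul, hx, hy, hc, Complex.norm_real,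
      Complex.norm_real, Real.norm_of_nonneg ht.1, Real.norm_of_nonneg (by linarith [ht.2])] at h2
    obtain rfl : t = 1 / 2 := by linarith
    have h3 : x = -(c • y) := by
      have h4 := congrArg (fun u => (2 : ℂ) • u) h1
      simp only [← neg_smul, smul_smul] at h4
      norm_num at h4
      rw [h4, show (2 * (1 / 2 * c) : ℂ) = c by ring]
    apply hzw
    rw [← hz, ← hw, h3, map_neg, map_smul, inner_neg_neg, inner_smul_left, inner_smul_right,
      ← mul_assoc, hcc, one_mul]
  obtain ⟨t, ht, hroot⟩ : ∃ t ∈ Set.Icc (0 : ℝ) 1,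
      (1 - t) ^ 2 + t * (1 - t) * r - a * ‖v t‖ ^ 2 = 0 := by
    have hcont : ContinuousOn
        (fun t : ℝ => (1 - t) ^ 2 + t * (1 - t) * r - a * ‖v t‖ ^ 2) (Set.Icc 0 1) := by
      apply Continuous.continuousOn
      fun_prop
    apply intermediate_value_Icc' zero_le_one hcont
    constructor
    · simp [v, norm_smul, hy, hc, ha]
    · simp [v, hx]
      linarith
  apply mem_of_ne_zero d (v t) (hv_ne t ht)
  have hvv : ⟪v t, v t⟫_ℂ = ((‖v t‖ ^ 2 : ℝ) : ℂ) := by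
    rw [inner_self_eq_norm_sq_to_K]; simp
  have h5 := hform t
  rw [sub_eq_zero.mp hroot, Complex.ofReal_mul, ← hvv] at h5
  simp only [Complex.real_smul]
  push_cast
  linear_combination h5
end

section
/- For a bounded operator d on a Hilbert space and a positive integer k, the k-numerical range W_k(d) is contained in V_k = {(1/k)·Tr(a d) : a trace-class, 0 ≤ a ≤ 1, Tr(a) = k}, and V_k is contained in the closure of W_k(d). -/
/-!
Both inclusions rest on computing traces through finite systems of vectors.

`W_k ⊆ V_k`: for an orthonormal family `x`, the projection `a = ∑ |xᵢ⟩⟨xᵢ|` has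
`Tr (a T) = ∑ ⟨xᵢ, T xᵢ⟩` by Parseval, and `a ≤ 1` is Bessel's inequality.

`V_k ⊆ closure W_k`: let `b = √a`, a Hilbert-Schmidt operator. Cyclicity of the trace
(`hasSum_trace_cyclic`) gives `Tr (a d) = ∑ₙ ⟨b eₙ, d b eₙ⟩`, so `a` may be replaced by the
finite-rank operator `∑_{n ∈ s} |b eₙ⟩⟨b eₙ| = b P b ≤ a`, whose trace is slightly less than `k`.
Diagonalising `P a P` turns the vectors `b eₙ` into mutually orthogonal ones of norm at most one;
a further unit vector orthogonal to all of them carries the missing trace `r`, at the cost of an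
error of at most `r ‖d‖` (`exists_orthonormal_near`).

It remains to see that `∑ wᵢ ⟨fᵢ, d fᵢ⟩`, with `f` a finite orthonormal family, `wᵢ ∈ [0, 1]` and
`∑ wᵢ = k`, equals `∑ ⟨xᵢ, d xᵢ⟩` for some orthonormal `x₁, …, x_k`
(`exists_orthonormal_of_weights`). If two weights are fractional, the two vectors carrying them can
be rotated in their plane so that one of the weights becomes `0` or `1` while the weighted sum is
unchanged (`exists_rotation`). This is the Toeplitz-Hausdorff theorem in dimension two
(`exists_pair_scalars`). Iterating, all weights become `0` or `1`.
-/

open scoped InnerProductSpace ComplexConjugate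

/-! ### The two-dimensional Toeplitz-Hausdorff theorem and integral weights -/

/-- Toeplitz-Hausdorff for the matrix `!![w₁, p; q, w₂]`: every point of the segment joining its
diagonal entries is the value of its quadratic form at a unit vector `(α, β)`. -/
lemma exists_pair_scalars (w₁ w₂ p q : ℂ) {t : ℝ} (h0 : 0 ≤ t) (h1 : t ≤ 1) :
    ∃ α β : ℂ, conj α * α + conj β * β = 1 ∧
      conj α * α * w₁ + conj α * β * p + conj β * α * q + conj β * β * w₂ =
        t * w₁ + (1 - t) * w₂ := by
  by_cases hw : w₁ = w₂
  · exact ⟨1, 0, by simp, by subst hw; simp only [map_one, map_zero]; ring⟩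
  have hδ : w₁ - w₂ ≠ 0 := sub_ne_zero.mpr hw
  set p' := p / (w₁ - w₂) with hpd
  set q' := q / (w₁ - w₂) with hqd
  -- a phase `u` making the off-diagonal term a real multiple of `w₁ - w₂`
  obtain ⟨u, hu, r, hr⟩ : ∃ u : ℂ, conj u * u = 1 ∧ ∃ r : ℝ, u * p' + conj u * q' = r := by
    set z : ℂ := ⟨(p' - q').re, -(p' + q').im⟩ with hz
    by_cases hz0 : z = 0
    · refine ⟨1, by simp, (p' + q').re, ?_⟩
      have him : (p' + q').im = 0 := by
        have := congrArg Complex.im hz0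
        simp only [hz, Complex.zero_im] at this
        linarith
      apply Complex.ext
      · simp
      · simpa using him
    · have hn : (‖z‖ : ℂ) ≠ 0 := by simpa using hz0
      refine ⟨z / ‖z‖, ?_, ((z / ‖z‖) * p' + conj (z / ‖z‖) * q').re, ?_⟩
      · have := Complex.conj_mul' z
        simp only [map_div₀, Complex.conj_ofReal]
        field_simp
        linear_combination this
      · apply Complex.ext
        · simp
        · rw [Complex.ofReal_im]
          have : (z / ‖z‖) * p' + conj (z / ‖z‖) * q' = (z * p' + conj z * q') / (‖z‖ : ℝ) := by
            simp only [map_div₀, Complex.conj_ofReal]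
            field_simp
          rw [this, Complex.div_ofReal_im]
          have : (z * p' + conj z * q').im = 0 := by
            simp [hz]; ring
          rw [this, zero_div]
  -- along `(cos θ, u sin θ)` the form stays on the line through `w₁` and `w₂`, from `w₁` to `w₂`
  obtain ⟨θ, -, hθ⟩ : ∃ θ ∈ Set.Icc (0 : ℝ) (Real.pi / 2),
      Real.cos θ ^ 2 + r * (Real.cos θ * Real.sin θ) = t := by
    have := intermediate_value_Icc' (a := 0) (b := Real.pi / 2)
      (f := fun θ => Real.cos θ ^ 2 + r * (Real.cos θ * Real.sin θ)) (by positivity) (by fun_prop)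
    obtain ⟨θ, h, h'⟩ := this (show t ∈ _ by simpa using ⟨h0, h1⟩)
    exact ⟨θ, h, h'⟩
  have hcs : (Real.cos θ : ℂ) ^ 2 + (Real.sin θ : ℂ) ^ 2 = 1 := by
    exact_mod_cast Real.cos_sq_add_sin_sq θ
  have hθ' : (Real.cos θ : ℂ) ^ 2 + r * (Real.cos θ * Real.sin θ) = t := by exact_mod_cast hθ
  have hpp : p = p' * (w₁ - w₂) := by rw [hpd]; field_simp
  have hqq : q = q' * (w₁ - w₂) := by rw [hqd]; field_simp
  refine ⟨Real.cos θ, u * Real.sin θ, ?_, ?_⟩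
  · simp only [map_mul, Complex.conj_ofReal]
    linear_combination hcs + (Real.sin θ : ℂ) ^ 2 * hu
  · simp only [map_mul, Complex.conj_ofReal]
    rw [hpp, hqq]
    linear_combination (w₁ - w₂) * hθ' + w₂ * hcs + (Real.sin θ : ℂ) ^ 2 * w₂ * hu
      + (Real.cos θ : ℂ) * Real.sin θ * (w₁ - w₂) * hr

section

variable {H : Type*} [NormedAddCommGroup H] [InnerProductSpace ℂ H]

/-- For an orthonormal pair, fractional weights `l₁, l₂` can be traded for weights `m₁, m₂`, one of which
is integral, on the rotated pair `α f₁ + β f₂`, `-β̄ f₁ + ᾱ f₂`. The new weights are `(l₁ + l₂, 0)` or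
`(1, l₁ + l₂ - 1)`, which have `(l₁, l₂)` in the segment between them and their swap. -/
lemma exists_rotation (d : H →L[ℂ] H) (f₁ f₂ : H) {l₁ l₂ : ℝ}
    (h10 : 0 < l₁) (h11 : l₁ < 1) (h20 : 0 < l₂) (h21 : l₂ < 1) :
    ∃ (α β : ℂ) (m₁ m₂ : ℝ), conj α * α + conj β * β = 1 ∧
      (0 ≤ m₁ ∧ m₁ ≤ 1) ∧ (0 ≤ m₂ ∧ m₂ ≤ 1) ∧ (m₁ = 1 ∨ m₂ = 0) ∧ m₁ + m₂ = l₁ + l₂ ∧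
      (m₁ : ℂ) * ⟪α • f₁ + β • f₂, d (α • f₁ + β • f₂)⟫_ℂ +
        m₂ * ⟪-conj β • f₁ + conj α • f₂, d (-conj β • f₁ + conj α • f₂)⟫_ℂ =
      l₁ * ⟪f₁, d f₁⟫_ℂ + l₂ * ⟪f₂, d f₂⟫_ℂ := by
  obtain ⟨m₁, m₂, hm1, hm2, hor, hsum, hlt, hle1, hle2⟩ : ∃ m₁ m₂ : ℝ, (0 ≤ m₁ ∧ m₁ ≤ 1) ∧
      (0 ≤ m₂ ∧ m₂ ≤ 1) ∧ (m₁ = 1 ∨ m₂ = 0) ∧ m₁ + m₂ = l₁ + l₂ ∧ m₂ < m₁ ∧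
      m₂ ≤ l₁ ∧ l₁ ≤ m₁ := by
    by_cases hs : l₁ + l₂ ≤ 1
    · exact ⟨l₁ + l₂, 0, by constructor <;> linarith, by norm_num, Or.inr rfl, by ring,
        by linarith, by linarith, by linarith⟩
    · push Not at hs
      exact ⟨1, l₁ + l₂ - 1, by norm_num, by constructor <;> linarith, Or.inl rfl, by ring,
        by linarith, by linarith, by linarith⟩
  have hpos : 0 < m₁ - m₂ := by linarith
  obtain ⟨α, β, hab, he⟩ := exists_pair_scalars ⟪f₁, d f₁⟫_ℂ ⟪f₂, d f₂⟫_ℂ ⟪f₁, d f₂⟫_ℂ ⟪f₂, d f₁⟫_ℂ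
    (t := (l₁ - m₂) / (m₁ - m₂)) (div_nonneg (by linarith) hpos.le)
    ((div_le_one hpos).2 (by linarith))
  refine ⟨α, β, m₁, m₂, hab, hm1, hm2, hor, hsum, ?_⟩
  set t := (l₁ - m₂) / (m₁ - m₂) with ht
  have ht' : (t : ℂ) * (m₁ - m₂) = l₁ - m₂ := by
    have : t * (m₁ - m₂) = l₁ - m₂ := by rw [ht]; field_simp
    exact_mod_cast this
  have hsum' : (m₁ : ℂ) + m₂ = l₁ + l₂ := by exact_mod_cast hsum
  simp only [map_add, map_smul, inner_add_left, inner_add_right, inner_smul_left, inner_smul_right,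
    map_neg, neg_smul, inner_neg_left, inner_neg_right, Complex.conj_conj]
  linear_combination (m₁ - m₂) * he + (⟪f₁, d f₁⟫_ℂ - ⟪f₂, d f₂⟫_ℂ) * ht'
    + m₂ * (⟪f₁, d f₁⟫_ℂ + ⟪f₂, d f₂⟫_ℂ) * hab + hsum' * ⟪f₂, d f₂⟫_ℂ

/-- A weighted sum of diagonal values of `d` with weights in `[0, 1]` of integral total `k` is an
unweighted sum over `k` orthonormal vectors. The induction is on a bound `m` for the number of
fractional weights. -/
lemma exists_orthonormal_of_weights (d : H →L[ℂ] H) (k : ℕ) {ι : Type*} [Fintype ι]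
    [DecidableEq ι] (m : ℕ) : ∀ (f : ι → H) (w : ι → ℝ), Orthonormal ℂ f →
      (∀ i, 0 ≤ w i ∧ w i ≤ 1) → ∑ i, w i = k →
      (Finset.univ.filter fun i => w i ≠ 0 ∧ w i ≠ 1).card ≤ m →
      ∃ x : Fin k → H, Orthonormal ℂ x ∧
        ∑ i, ⟪x i, d (x i)⟫_ℂ = ∑ i, (w i : ℂ) * ⟪f i, d (f i)⟫_ℂ := by
  induction m with
  | zero =>
    intro f w hf hw hsum hcard
    have h01 : ∀ i, w i = if w i = 1 then 1 else 0 := by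
      intro i
      have : i ∉ Finset.univ.filter fun i => w i ≠ 0 ∧ w i ≠ 1 := by
        rw [Finset.card_eq_zero.mp (Nat.le_zero.mp hcard)]; simp
      simp at this
      split_ifs with h
      · exact h
      · by_contra h'; exact h (this h')
    have hc : Fintype.card {i // w i = 1} = k := by
      rw [Fintype.card_subtype]
      have : ∑ i, w i = ∑ i, if w i = 1 then (1 : ℝ) else 0 :=
        Finset.sum_congr rfl fun i _ => h01 i
      rw [this, Finset.sum_boole] at hsum
      exact_mod_cast hsum
    let φ := (Fintype.equivFinOfCardEq hc).symm
    refine ⟨fun i => f (φ i), hf.comp _ (Subtype.val_injective.comp φ.injective), ?_⟩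
    rw [φ.sum_comp (fun i : {i // w i = 1} => ⟪f i, d (f i)⟫_ℂ),
      ← Finset.sum_subtype (Finset.univ.filter fun i => w i = 1) (by simp)
        (fun i => ⟪f i, d (f i)⟫_ℂ), Finset.sum_filter]
    refine Finset.sum_congr rfl fun i _ => ?_
    by_cases h : w i = 1
    · simp [h]
    · have h0 := h01 i
      rw [if_neg h] at h0
      simp [h0]
  | succ m ih =>
    intro f w hf hw hsum hcard
    by_cases hne : ∃ i, w i ≠ 0 ∧ w i ≠ 1
    swap
    · refine ih f w hf hw hsum ?_
      rw [Finset.card_eq_zero.mpr]; · simp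
      simpa [Finset.filter_eq_empty_iff] using hne
    obtain ⟨i, hi0, hi1⟩ := hne
    -- integrality of the total weight forces a second fractional weight
    obtain ⟨j, hji, hj0, hj1⟩ : ∃ j, j ≠ i ∧ w j ≠ 0 ∧ w j ≠ 1 := by
      by_contra! hcon
      have h01 : ∀ j ∈ Finset.univ.erase i, w j = if w j = 1 then 1 else 0 := by
        intro j hj
        split_ifs with h
        · exact h
        · by_contra h'; exact h (hcon j (Finset.ne_of_mem_erase hj) h')
      rw [← Finset.add_sum_erase _ _ (Finset.mem_univ i), Finset.sum_congr rfl h01,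
        Finset.sum_boole] at hsum
      set c := (Finset.filter (fun j => w j = 1) (Finset.univ.erase i)).card
      have a1 := lt_of_le_of_ne (hw i).1 hi0.symm
      have a2 := lt_of_le_of_ne (hw i).2 hi1
      have b1 : (c : ℝ) < k := by linarith
      have b2 : (k : ℝ) < c + 1 := by linarith
      have b1' : c < k := by exact_mod_cast b1
      have b2' : k < c + 1 := by exact_mod_cast b2
      omega
    obtain ⟨α, β, m₁, m₂, hab, hm1, hm2, hor, hms, he⟩ := exists_rotation d (f i) (f j)
      (lt_of_le_of_ne (hw i).1 hi0.symm) (lt_of_le_of_ne (hw i).2 hi1)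
      (lt_of_le_of_ne (hw j).1 hj0.symm) (lt_of_le_of_ne (hw j).2 hj1)
    set g₁ := α • f i + β • f j with hg1
    set g₂ := -conj β • f i + conj α • f j with hg2
    let f' : ι → H := fun l => if l = i then g₁ else if l = j then g₂ else f l
    let w' : ι → ℝ := fun l => if l = i then m₁ else if l = j then m₂ else w l
    have hf'i : f' i = g₁ := by simp [f']
    have hf'j : f' j = g₂ := by simp [f', hji]
    have hf'l : ∀ l, l ≠ i → l ≠ j → f' l = f l := by intro l h h'; simp [f', h, h']
    have hw'i : w' i = m₁ := by simp [w']
    have hw'j : w' j = m₂ := by simp [w', hji]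
    have hw'l : ∀ l, l ≠ i → l ≠ j → w' l = w l := by intro l h h'; simp [w', h, h']
    have hF := orthonormal_iff_ite.mp hf
    have hf' : Orthonormal ℂ f' := by
      rw [orthonormal_iff_ite]
      intro a b
      by_cases ai : a = i
      · subst ai
        by_cases bi : b = a
        · subst bi
          rw [hf'i, hg1]
          simp only [inner_add_left, inner_add_right, inner_smul_left, inner_smul_right, hF]
          simp [hji, hji.symm]
          linear_combination hab
        by_cases bj : b = j
        · subst bj
          rw [hf'i, hf'j, hg1, hg2]
          simp only [inner_add_left, inner_add_right, inner_smul_left, inner_smul_right, hF]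
          simp [hji, hji.symm]
          ring
        · rw [hf'i, hf'l b bi bj, hg1]
          simp only [inner_add_left, inner_smul_left, hF]
          simp [Ne.symm bi, Ne.symm bj]
      by_cases aj : a = j
      · subst aj
        by_cases bi : b = i
        · subst bi
          rw [hf'i, hf'j, hg1, hg2]
          simp only [inner_add_left, inner_add_right, inner_smul_left, inner_smul_right, hF]
          simp [hji, hji.symm]
          ring
        by_cases bj : b = a
        · subst bj
          rw [hf'j, hg2]
          simp only [inner_add_left, inner_add_right, inner_smul_left, inner_smul_right, hF]
          simp [hji, hji.symm]
          linear_combination hab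
        · rw [hf'j, hf'l b bi bj, hg2]
          simp only [inner_add_left, inner_smul_left, hF]
          simp [Ne.symm bi, Ne.symm bj]
      · rw [hf'l a ai aj]
        by_cases bi : b = i
        · subst bi
          rw [hf'i, hg1]
          simp only [inner_add_right, inner_smul_right, hF]
          simp [ai, aj]
        by_cases bj : b = j
        · subst bj
          rw [hf'j, hg2]
          simp only [inner_add_right, inner_smul_right, hF]
          simp [ai, aj]
        · rw [hf'l b bi bj, hF]
    have hw' : ∀ l, 0 ≤ w' l ∧ w' l ≤ 1 := by
      intro l
      simp only [w']
      split_ifs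
      exacts [hm1, hm2, hw l]
    have hsum' : ∑ l, w' l = k := by
      rw [← hsum, ← sub_eq_zero, ← Finset.sum_sub_distrib,
        Fintype.sum_eq_add i j hji.symm (fun l hl => by rw [hw'l l hl.1 hl.2, sub_self]),
        hw'i, hw'j]
      linarith
    have hval : ∑ l, (w' l : ℂ) * ⟪f' l, d (f' l)⟫_ℂ = ∑ l, (w l : ℂ) * ⟪f l, d (f l)⟫_ℂ := by
      rw [← sub_eq_zero, ← Finset.sum_sub_distrib, Fintype.sum_eq_add i j hji.symm
        (fun l hl => by rw [hw'l l hl.1 hl.2, hf'l l hl.1 hl.2, sub_self]), hw'i, hw'j, hf'i, hf'j]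
      linear_combination he
    rw [← hval]
    refine ih f' w' hf' hw' hsum' ?_
    refine Nat.le_of_lt_succ (lt_of_lt_of_le (Finset.card_lt_card ?_) hcard)
    rw [Finset.ssubset_iff_of_subset]
    · rcases hor with h | h
      · exact ⟨i, by simp [hi0, hi1], by simp [hw'i, h]⟩
      · exact ⟨j, by simp [hj0, hj1], by simp [hw'j, h]⟩
    · intro l hl
      simp only [Finset.mem_filter, Finset.mem_univ, true_and] at hl ⊢
      by_cases hli : l = i
      · subst hli; exact ⟨hi0, hi1⟩
      by_cases hlj : l = j
      · subst hlj; exact ⟨hj0, hj1⟩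
      · rwa [hw'l l hli hlj] at hl

/-! ### Hilbert-Schmidt summability and cyclicity of the trace -/

lemma hasSum_re_of_ofReal {g : ℕ → ℝ} {c : ℝ} (h : HasSum (fun n => (g n : ℂ)) (c : ℂ)) :
    HasSum g c := by
  simpa using Complex.reCLM.hasSum h

lemma hasSum_sq_norm_inner (e : HilbertBasis ℕ ℂ H) (x : H) :
    HasSum (fun n => ‖⟪e n, x⟫_ℂ‖ ^ 2) (‖x‖ ^ 2) := by
  have h := e.hasSum_inner_mul_inner x x
  rw [inner_self_eq_norm_sq_to_K] at h
  have h2 : ∀ n, ⟪x, e n⟫_ℂ * ⟪e n, x⟫_ℂ = ((‖⟪e n, x⟫_ℂ‖ ^ 2 : ℝ) : ℂ) := by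
    intro n
    rw [← inner_conj_symm x (e n), Complex.conj_mul']
    push_cast; rfl
  simp only [h2] at h
  exact hasSum_re_of_ofReal (by simpa using h)

/-- The matrix of a Hilbert-Schmidt operator, given by its columns `g`, is square-summable. -/
lemma summable_sq_norm_inner (e : HilbertBasis ℕ ℂ H) {g : ℕ → H}
    (hg : Summable fun n => ‖g n‖ ^ 2) :
    Summable fun p : ℕ × ℕ => ‖⟪e p.2, g p.1⟫_ℂ‖ ^ 2 := by
  rw [summable_prod_of_nonneg (fun p => by positivity)]
  refine ⟨fun i => (hasSum_sq_norm_inner e (g i)).summable, ?_⟩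
  simpa only [(hasSum_sq_norm_inner e _).tsum_eq] using hg

set_option maxHeartbeats 1000000 in
/-- `Tr (b (b d)) = Tr ((b d) b)` for a self-adjoint Hilbert-Schmidt operator `b`: expand both traces in
the basis `e`; the resulting double series converges absolutely, so the summations commute. -/
lemma hasSum_trace_cyclic [CompleteSpace H]
    (e : HilbertBasis ℕ ℂ H) (b d : H →L[ℂ] H)
    (hb : ∀ x y, ⟪b x, y⟫_ℂ = ⟪x, b y⟫_ℂ) (hs : Summable fun n => ‖b (e n)‖ ^ 2) {w : ℂ}
    (h : HasSum (fun n => ⟪b (e n), b (d (e n))⟫_ℂ) w) :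
    HasSum (fun n => ⟪b (e n), d (b (e n))⟫_ℂ) w := by
  have hx : ∀ i j, ⟪e j, b (d (e i))⟫_ℂ = ⟪d.adjoint (b (e j)), e i⟫_ℂ := by
    intro i j
    rw [ContinuousLinearMap.adjoint_inner_left, hb]
  let F : ℕ × ℕ → ℂ := fun p => ⟪b (e p.1), e p.2⟫_ℂ * ⟪e p.2, b (d (e p.1))⟫_ℂ
  have hF : Summable F := by
    have s1 := summable_sq_norm_inner e hs
    have s2 : Summable fun p : ℕ × ℕ => ‖⟪e p.1, d.adjoint (b (e p.2))⟫_ℂ‖ ^ 2 := by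
      have : Summable fun n => ‖d.adjoint (b (e n))‖ ^ 2 := by
        refine Summable.of_nonneg_of_le (fun n => by positivity) (fun n => ?_)
          (hs.mul_left (‖d.adjoint‖ ^ 2))
        rw [← mul_pow]
        gcongr
        exact d.adjoint.le_opNorm _
      exact (summable_sq_norm_inner e this).prod_symm
    refine Summable.of_norm_bounded (s1.add s2) fun p => ?_
    simp only [F]
    rw [norm_mul, hx, norm_inner_symm, norm_inner_symm (d.adjoint _)]
    nlinarith [sq_nonneg (‖⟪e p.2, b (e p.1)⟫_ℂ‖ - ‖⟪e p.1, d.adjoint (b (e p.2))⟫_ℂ‖),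
      sq_nonneg (‖⟪e p.2, b (e p.1)⟫_ℂ‖), sq_nonneg ‖⟪e p.1, d.adjoint (b (e p.2))⟫_ℂ‖]
  have h1 : HasSum (fun n => ⟪b (e n), b (d (e n))⟫_ℂ) (∑' p, F p) :=
    hF.hasSum.prod_fiberwise fun i => e.hasSum_inner_mul_inner _ _
  have h2 : HasSum (fun n => ⟪b (e n), d (b (e n))⟫_ℂ) (∑' p, F p) := by
    refine (((Equiv.prodComm ℕ ℕ).hasSum_iff).mpr hF.hasSum).prod_fiberwise fun j => ?_
    rw [← ContinuousLinearMap.adjoint_inner_left]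
    have hterm : ∀ i, (F ∘ Equiv.prodComm ℕ ℕ) (j, i) =
        ⟪d.adjoint (b (e j)), e i⟫_ℂ * ⟪e i, b (e j)⟫_ℂ := by
      intro i
      change ⟪b (e i), e j⟫_ℂ * ⟪e j, b (d (e i))⟫_ℂ = _
      rw [hx, hb, mul_comm]
    simp only [hterm]
    exact e.hasSum_inner_mul_inner _ _
  rwa [h.unique h1]

/-! ### Finite-rank truncation -/

section
variable {E : Type*} [NormedAddCommGroup E] [InnerProductSpace ℂ E] [FiniteDimensional ℂ E]

/-- An eigenbasis of `B* B`, as in the singular value decomposition of `B`. -/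
lemma exists_orthonormalBasis_orthogonal_image [CompleteSpace H]
    (B : E →L[ℂ] H) :
    ∃ u : OrthonormalBasis (Fin (Module.finrank ℂ E)) ℂ E,
      ∀ i j, i ≠ j → ⟪B (u i), B (u j)⟫_ℂ = 0 := by
  have : CompleteSpace E := FiniteDimensional.complete ℂ E
  have hT := (ContinuousLinearMap.isPositive_adjoint_comp_self B).isSymmetric
  refine ⟨hT.eigenvectorBasis rfl, fun i j hij => ?_⟩
  have h := hT.apply_eigenvectorBasis rfl j
  rw [← ContinuousLinearMap.adjoint_inner_right]
  have h' : B.adjoint (B (hT.eigenvectorBasis rfl j)) =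
    (hT.eigenvalues rfl j : ℂ) • hT.eigenvectorBasis rfl j := h
  rw [h', inner_smul_right, (hT.eigenvectorBasis rfl).orthonormal.2 hij, mul_zero]

/-- Both sides are the trace of `B* d B`. -/
lemma sum_inner_eq_sum_inner [CompleteSpace H]
    (B : E →L[ℂ] H) (d : H →L[ℂ] H) {ι κ : Type*} [Fintype ι] [Fintype κ]
    (u : OrthonormalBasis ι ℂ E) (v : OrthonormalBasis κ ℂ E) :
    ∑ i, ⟪B (u i), d (B (u i))⟫_ℂ = ∑ i, ⟪B (v i), d (B (v i))⟫_ℂ := by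
  classical
  have : CompleteSpace E := FiniteDimensional.complete ℂ E
  let T : E →L[ℂ] E := B.adjoint ∘L d ∘L B
  have h1 := LinearMap.trace_eq_sum_inner (T : E →ₗ[ℂ] E) u
  have h2 := LinearMap.trace_eq_sum_inner (T : E →ₗ[ℂ] E) v
  have := h1.symm.trans h2
  simpa [T, ContinuousLinearMap.adjoint_inner_right] using this
end

lemma exists_unit_orthogonal (e : HilbertBasis ℕ ℂ H) {κ : Type*} [Finite κ] (v : κ → H) :
    ∃ x : H, ‖x‖ = 1 ∧ ∀ i, ⟪v i, x⟫_ℂ = 0 := by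
  let K := Submodule.span ℂ (Set.range v)
  have : FiniteDimensional ℂ K := FiniteDimensional.span_of_finite ℂ (Set.finite_range v)
  have hK : Kᗮ ≠ ⊥ := by
    intro h
    rw [Submodule.orthogonal_eq_bot_iff] at h
    have : FiniteDimensional ℂ H := by
      rw [h] at this
      exact Module.Finite.equiv (Submodule.topEquiv (R := ℂ) (M := H))
    exact not_finite_iff_infinite.mpr inferInstance e.orthonormal.linearIndependent.finite
  obtain ⟨y, hy, hy0⟩ := Submodule.exists_mem_ne_zero_of_ne_bot hK
  refine ⟨(‖y‖ : ℂ)⁻¹ • y, norm_smul_inv_norm hy0, fun i => ?_⟩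
  rw [inner_smul_right, hy (v i) (Submodule.subset_span ⟨i, rfl⟩), mul_zero]

/-- Cutting the trace `∑ₙ ⟨b eₙ, d b eₙ⟩` off at a finite set `s` that misses the amount `r` of
`∑ₙ ‖b eₙ‖² = k` lands within `r ‖d‖` of an unnormalised value of the `k`-numerical range. -/
lemma exists_orthonormal_near [CompleteSpace H]
    (e : HilbertBasis ℕ ℂ H) (b d : H →L[ℂ] H)
    (hb : ∀ x, ‖b x‖ ≤ ‖x‖) (k : ℕ) (s : Finset ℕ) {r : ℝ} (hr0 : 0 ≤ r) (hr1 : r ≤ 1)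
    (hr : ∑ n ∈ s, ‖b (e n)‖ ^ 2 + r = k) :
    ∃ x : Fin k → H, Orthonormal ℂ x ∧
      ‖∑ i, ⟪x i, d (x i)⟫_ℂ - ∑ n ∈ s, ⟪b (e n), d (b (e n))⟫_ℂ‖ ≤ r * ‖d‖ := by
  classical
  let E := Submodule.span ℂ (s.image e : Set H)
  have : FiniteDimensional ℂ E := FiniteDimensional.span_of_finite ℂ (Finset.finite_toSet _)
  let B : E →L[ℂ] H := b ∘L E.subtypeL
  let v := OrthonormalBasis.span e.orthonormal s
  have hv : ∀ n : s, B (v n) = b (e n) := by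
    intro n
    simp [B, v, OrthonormalBasis.span_apply]
  obtain ⟨u, hu⟩ := exists_orthonormalBasis_orthogonal_image B
  have htr : ∀ T : H →L[ℂ] H, ∑ i, ⟪B (u i), T (B (u i))⟫_ℂ =
      ∑ n ∈ s, ⟪b (e n), T (b (e n))⟫_ℂ := by
    intro T
    rw [sum_inner_eq_sum_inner B T u v, ← Finset.sum_coe_sort s]
    simp only [hv]
  have htr1 : ∑ i, ‖B (u i)‖ ^ 2 = ∑ n ∈ s, ‖b (e n)‖ ^ 2 := by
    have := htr 1
    simp only [one_apply_eq_self, inner_self_eq_norm_sq_to_K] at this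
    exact_mod_cast this
  have hB : ∀ i, ‖B (u i)‖ ≤ 1 := by
    intro i
    refine (hb _).trans ?_
    exact (u.orthonormal.1 i).le
  -- only the nonzero images can be normalised; `none` will index the extra unit vector `ξ`
  let κ := {i // B (u i) ≠ 0}
  have hsub : ∀ {M : Type} [AddCommMonoid M] (F : Fin (Module.finrank ℂ E) → M),
      (∀ i, B (u i) = 0 → F i = 0) → ∑ i : κ, F i = ∑ i, F i := by
    intro M _ F hF
    rw [← Finset.sum_subtype (Finset.univ.filter fun i => B (u i) ≠ 0) (by simp) F]
    refine Finset.sum_filter_of_ne fun i _ h h' => h (hF i h')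
  obtain ⟨ξ, hξ, hξo⟩ := exists_unit_orthogonal e (fun i => B (u i))
  let f : Option κ → H := fun o => o.elim ξ fun i => (‖B (u i)‖ : ℂ)⁻¹ • B (u i)
  let w : Option κ → ℝ := fun o => o.elim r fun i => ‖B (u i)‖ ^ 2
  have hf : Orthonormal ℂ f := by
    constructor
    · rintro (_ | i)
      · exact hξ
      · exact norm_smul_inv_norm i.2
    · rintro (_ | i) (_ | j) hij
      · exact absurd rfl hij
      · simp only [f, Option.elim]
        rw [inner_smul_right, inner_eq_zero_symm.mp (hξo j), mul_zero]
      · simp only [f, Option.elim]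
        rw [inner_smul_left, hξo i, mul_zero]
      · simp only [f, Option.elim]
        rw [inner_smul_left, inner_smul_right, hu, mul_zero, mul_zero]
        rintro h
        exact hij (congrArg some (Subtype.ext h))
  have hw : ∀ o, 0 ≤ w o ∧ w o ≤ 1 := by
    rintro (_ | i)
    · exact ⟨hr0, hr1⟩
    · exact ⟨sq_nonneg _, pow_le_one₀ (norm_nonneg _) (hB i)⟩
  have hsum : ∑ o, w o = k := by
    rw [Fintype.sum_option, ← hr, ← htr1, add_comm]
    congr 1
    exact hsub (fun i => ‖B (u i)‖ ^ 2) (by intro i h; simp [h])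
  obtain ⟨x, hx, hxs⟩ := exists_orthonormal_of_weights d k _ f w hf hw hsum le_rfl
  refine ⟨x, hx, ?_⟩
  have hval : ∑ i : κ, (w (some i) : ℂ) * ⟪f (some i), d (f (some i))⟫_ℂ =
      ∑ n ∈ s, ⟪b (e n), d (b (e n))⟫_ℂ := by
    rw [← htr d, ← hsub (fun i => ⟪B (u i), d (B (u i))⟫_ℂ) (by intro i h; simp [h])]
    refine Finset.sum_congr rfl fun i _ => ?_
    have : (‖B (u i)‖ : ℂ) ≠ 0 := by simpa using i.2
    simp only [f, w, Option.elim, map_smul, inner_smul_left, inner_smul_right, map_inv₀,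
      Complex.conj_ofReal]
    push_cast
    field_simp
  rw [hxs, Fintype.sum_option, hval, add_sub_cancel_right, norm_mul]
  simp only [f, w, Option.elim]
  rw [Complex.norm_real, Real.norm_of_nonneg hr0]
  refine mul_le_mul_of_nonneg_left ?_ hr0
  calc ‖⟪ξ, d ξ⟫_ℂ‖ ≤ ‖ξ‖ * ‖d ξ‖ := norm_inner_le_norm _ _
    _ ≤ ‖ξ‖ * (‖d‖ * ‖ξ‖) := by gcongr; exact d.le_opNorm _
    _ = ‖d‖ := by rw [hξ]; ring

end

/-! ### The two inclusions -/

theorem kNumericalRange_subset_Vk_subset_closure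
    {H : Type*} [NormedAddCommGroup H] [InnerProductSpace ℂ H] [CompleteSpace H]
    (e : HilbertBasis ℕ ℂ H) (d : H →L[ℂ] H) (k : ℕ) (hk : 1 ≤ k) :
    {z : ℂ | ∃ x : Fin k → H, Orthonormal ℂ x ∧
        (1 / (k : ℂ)) * ∑ i, ⟪x i, d (x i)⟫_ℂ = z} ⊆
      {z : ℂ | ∃ a : H →L[ℂ] H, a.IsPositive ∧ ((1 : H →L[ℂ] H) - a).IsPositive ∧
        HasSum (fun n => ⟪e n, a (e n)⟫_ℂ) (k : ℂ) ∧
        HasSum (fun n => ⟪e n, a (d (e n))⟫_ℂ) ((k : ℂ) * z)} ∧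
    {z : ℂ | ∃ a : H →L[ℂ] H, a.IsPositive ∧ ((1 : H →L[ℂ] H) - a).IsPositive ∧
        HasSum (fun n => ⟪e n, a (e n)⟫_ℂ) (k : ℂ) ∧
        HasSum (fun n => ⟪e n, a (d (e n))⟫_ℂ) ((k : ℂ) * z)} ⊆
      closure {z : ℂ | ∃ x : Fin k → H, Orthonormal ℂ x ∧
        (1 / (k : ℂ)) * ∑ i, ⟪x i, d (x i)⟫_ℂ = z} := by
  have hk0 : (k : ℂ) ≠ 0 := by exact_mod_cast (by omega : k ≠ 0)
  constructor
  · rintro z ⟨x, hx, rfl⟩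
    let a : H →L[ℂ] H := ∑ i, InnerProductSpace.rankOne ℂ (x i) (x i)
    have ha : ∀ y, a y = ∑ i, ⟪x i, y⟫_ℂ • x i := by
      intro y; simp [a]
    have hpos : a.IsPositive :=
      ContinuousLinearMap.isPositive_sum _ fun i _ => InnerProductSpace.isPositive_rankOne_self _
    -- `Tr(|xᵢ⟩⟨xᵢ| T) = ⟨xᵢ, T xᵢ⟩` is Parseval's identity for `T* xᵢ` and `xᵢ`
    have key : ∀ T : H →L[ℂ] H, HasSum (fun n => ⟪e n, a (T (e n))⟫_ℂ) (∑ i, ⟪x i, T (x i)⟫_ℂ) := by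
      intro T
      simp only [ha, inner_sum, inner_smul_right]
      refine hasSum_sum fun i _ => ?_
      simp only [← ContinuousLinearMap.adjoint_inner_left T]
      exact e.hasSum_inner_mul_inner _ _
    refine ⟨a, hpos, ?_, ?_, ?_⟩
    · refine ⟨(ContinuousLinearMap.isPositive_one.isSymmetric).sub hpos.isSymmetric, fun y => ?_⟩
      have hB := hx.sum_inner_products_le (s := Finset.univ) y
      have : (⟪a y, y⟫_ℂ).re = ∑ i, ‖⟪x i, y⟫_ℂ‖ ^ 2 := by
        rw [ha, sum_inner, Complex.re_sum]
        refine Finset.sum_congr rfl fun i _ => ?_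
        rw [inner_smul_left, Complex.conj_mul', ← Complex.ofReal_pow, Complex.ofReal_re]
      have h2 : (⟪y, y⟫_ℂ).re = ‖y‖ ^ 2 := by
        rw [inner_self_eq_norm_sq_to_K, ← RCLike.ofReal_pow]; exact Complex.ofReal_re _
      simp only [ContinuousLinearMap.reApplyInnerSelf_apply, sub_apply,
        one_apply_eq_self, inner_sub_left, map_sub]
      change 0 ≤ (⟪y, y⟫_ℂ).re - (⟪a y, y⟫_ℂ).re
      linarith
    · have := key 1
      simpa [inner_self_eq_norm_sq_to_K, hx.1] using this
    · have := key d
      convert this using 1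
      field_simp
  · rintro z ⟨a, ha, ha1, htr, htrd⟩
    let b : H →L[ℂ] H := CFC.sqrt a
    have ha' : 0 ≤ a := (ContinuousLinearMap.nonneg_iff_isPositive a).mpr ha
    have hbb : ∀ x, b (b x) = a x := fun x =>
      congrArg (fun T : H →L[ℂ] H => T x) (CFC.sqrt_mul_sqrt_self a ha')
    have hbpos : b.IsPositive :=
      (ContinuousLinearMap.nonneg_iff_isPositive _).mp (CFC.sqrt_nonneg a)
    have hbs : ∀ x y, ⟪b x, y⟫_ℂ = ⟪x, b y⟫_ℂ := hbpos.inner_left_eq_inner_right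
    have hab : ∀ x y, ⟪x, a y⟫_ℂ = ⟪b x, b y⟫_ℂ := fun x y => by rw [hbs, hbb]
    have hbn : ∀ x, ‖b x‖ ≤ ‖x‖ := by
      intro x
      have h := ha1.re_inner_nonneg_right x
      rw [sub_apply, one_apply_eq_self, inner_sub_right, hab,
        map_sub, inner_self_eq_norm_sq, inner_self_eq_norm_sq] at h
      exact le_of_sq_le_sq (by linarith) (norm_nonneg _)
    simp only [hab] at htr htrd
    have htr' : HasSum (fun n => ‖b (e n)‖ ^ 2) (k : ℝ) := by
      simp only [inner_self_eq_norm_sq_to_K] at htr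
      exact hasSum_re_of_ofReal (by simpa using htr)
    have hcyc := hasSum_trace_cyclic e b d hbs htr'.summable htrd
    rw [Metric.mem_closure_iff]
    intro ε hε
    -- the bound by `1` makes the missing trace an admissible weight
    set δ := min 1 (ε / (2 * (‖d‖ + 1))) with hδ
    have hδ0 : 0 < δ := by positivity
    obtain ⟨s, hs1, hs2⟩ := ((htr'.eventually (Metric.ball_mem_nhds _ hδ0)).and
      (hcyc.eventually (Metric.ball_mem_nhds _ (half_pos hε)))).exists
    rw [Real.dist_eq, abs_lt] at hs1
    rw [dist_eq_norm] at hs2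
    have hle := sum_le_hasSum s (fun n _ => by positivity) htr'
    obtain ⟨x, hx, hxd⟩ := exists_orthonormal_near e b d hbn k s
      (r := k - ∑ n ∈ s, ‖b (e n)‖ ^ 2) (by linarith)
      (by have := min_le_left 1 (ε / (2 * (‖d‖ + 1))); linarith) (by ring)
    refine ⟨_, ⟨x, hx, rfl⟩, ?_⟩
    have hrd : (k - ∑ n ∈ s, ‖b (e n)‖ ^ 2) * ‖d‖ ≤ ε / 2 := by
      have h1 : k - ∑ n ∈ s, ‖b (e n)‖ ^ 2 ≤ ε / (2 * (‖d‖ + 1)) := by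
        have := min_le_right 1 (ε / (2 * (‖d‖ + 1))); linarith
      calc _ ≤ ε / (2 * (‖d‖ + 1)) * (‖d‖ + 1) := by gcongr; linarith
        _ = ε / 2 := by field_simp
    have hk1 : (1 : ℝ) ≤ k := by exact_mod_cast hk
    have hfac : z - 1 / (k : ℂ) * ∑ i, ⟪x i, d (x i)⟫_ℂ =
        (1 / (k : ℂ)) * ((k : ℂ) * z - ∑ i, ⟪x i, d (x i)⟫_ℂ) := by field_simp
    rw [dist_eq_norm, hfac, norm_mul]
    have hn : ‖(1 / (k : ℂ))‖ ≤ 1 := by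
      rw [norm_div, norm_one, Complex.norm_natCast]
      exact (div_le_one (by linarith)).2 hk1
    calc _ ≤ 1 * ‖(k : ℂ) * z - ∑ i, ⟪x i, d (x i)⟫_ℂ‖ := by gcongr
      _ = ‖((∑ i, ⟪x i, d (x i)⟫_ℂ - ∑ n ∈ s, ⟪b (e n), d (b (e n))⟫_ℂ)) +
          (∑ n ∈ s, ⟪b (e n), d (b (e n))⟫_ℂ - (k : ℂ) * z)‖ := by
        rw [one_mul, norm_sub_rev]; congr 1; ring
      _ < ε / 2 + ε / 2 := (norm_add_le _ _).trans_lt (add_lt_add_of_le_of_lt (hxd.trans hrd) hs2)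
      _ = ε := by ring
end
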